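/- For every J ∈ Φ_θ, the vectors {s_*λ_α : α ∈ J} in V⁻ = ℝ^{Q₁}/r_*(ℝ^{Q₀}) are linearly independent over ℝ; in particular the cone σ⁻_J is a simplicial cone of dimension equal to the cardinality of J. -/

import Mathlib

/-- The quiver is connected: any two vertices are related by the equivalence
relation generated by "there is an arrow between them". -/
def QuiverConnected {Q₀ Q₁ : Type} (src tgt : Q₁ → Q₀) : Prop :=
  ∀ i j : Q₀, Relation.EqvGen (fun i j => ∃ α : Q₁, src α = i ∧ tgt α = j) i j

/-- The indicator vector of a finite subset of the vertices. -/
def indVec {Q₀ : Type} [DecidableEq Q₀] (I' : Finset Q₀) : Q₀ → ℤ :=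
  fun i => if i ∈ I' then 1 else 0

/-- A subset `J ⊆ Q₁` is `θ`-stable if `θ(𝟙_{I'}) > 0` for every nonempty proper
`I' ∈ S(J)`, where `S(J)` consists of the subsets `I' ⊆ Q₀` such that every arrow
`α ∈ J` with source in `I'` has target in `I'`. -/
def StableArrowSet {Q₀ Q₁ : Type} [Fintype Q₀] [DecidableEq Q₀] (src tgt : Q₁ → Q₀)
    (θ : (Q₀ → ℤ) →ₗ[ℤ] ℤ) (J : Finset Q₁) : Prop :=
  ∀ I' : Finset Q₀, (∀ α ∈ J, src α ∈ I' → tgt α ∈ I') →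
    I'.Nonempty → I' ≠ Finset.univ → 0 < θ (indVec I')

/-- `Φ_θ = {J ⊆ Q₁ : Q₁ ∖ J is θ-stable}`. -/
def PhiTheta {Q₀ Q₁ : Type} [Fintype Q₀] [DecidableEq Q₀] [Fintype Q₁] [DecidableEq Q₁]
    (src tgt : Q₁ → Q₀) (θ : (Q₀ → ℤ) →ₗ[ℤ] ℤ) : Set (Finset Q₁) :=
  {J | StableArrowSet src tgt θ Jᶜ}

/-- The linear map `r_* : ℝ^{Q₀} → ℝ^{Q₁}`, `(r_*λ)_α = λ_{tgt α} − λ_{src α}`. -/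
def rMap {Q₀ Q₁ : Type} (src tgt : Q₁ → Q₀) : (Q₀ → ℝ) →ₗ[ℝ] (Q₁ → ℝ) where
  toFun lam := fun α => lam (tgt α) - lam (src α)
  map_add' := by intro x y; funext α; simp; ring
  map_smul' := by intro c x; funext α; simp; ring

/-- `V⁻ = ℝ^{Q₁}/r_*(ℝ^{Q₀})`. -/
abbrev Vminus {Q₀ Q₁ : Type} (src tgt : Q₁ → Q₀) : Type :=
  (Q₁ → ℝ) ⧸ LinearMap.range (rMap src tgt)

/-- The quotient map `s_* : ℝ^{Q₁} → V⁻`. -/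
noncomputable def sMap {Q₀ Q₁ : Type} (src tgt : Q₁ → Q₀) :
    (Q₁ → ℝ) →ₗ[ℝ] Vminus src tgt :=
  (LinearMap.range (rMap src tgt)).mkQ

/-- The standard basis vector `λ_α` of `ℝ^{Q₁}`. -/
noncomputable def lamb {Q₁ : Type} [DecidableEq Q₁] (α : Q₁) : Q₁ → ℝ :=
  Pi.single α 1

/-!
A nonempty proper vertex set `A` that no arrow of a stable set `K` enters or leaves would give
`θ(𝟙_A) > 0` and `θ(𝟙_{Aᶜ}) > 0`, although these sum to `θ(𝟙) = 0`; so the arrows of `K` alone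
connect the quiver. For `J ∈ Φ_θ` this applies to `K = Q₁ ∖ J`. A linear relation among the
`s_*λ_α`, `α ∈ J`, is an element `r_*λ` supported on `J`, so `λ` takes equal values at the two ends
of every arrow of `K`. Hence `λ` is constant and `r_*λ = 0`.
-/

section Connectivity

variable {Q₀ Q₁ : Type} {src tgt : Q₁ → Q₀}

theorem QuiverConnected.apply_eq_apply {X : Type*} (hconn : QuiverConnected src tgt) {f : Q₀ → X}
    (hf : ∀ α, f (src α) = f (tgt α)) (i j : Q₀) : f i = f j :=
  (Setoid.eqvGen_le (s := Setoid.ker f) fun _ _ ⟨α, hsrc, htgt⟩ => hsrc ▸ htgt ▸ hf α) (hconn i j)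

theorem quiverConnected_of_forall_eq_univ
    (h : ∀ A : Set Q₀, A.Nonempty → (∀ α, src α ∈ A ↔ tgt α ∈ A) → A = Set.univ) :
    QuiverConnected src tgt := by
  intro i
  let component : Set Q₀ := {j | Relation.EqvGen (fun k l => ∃ α, src α = k ∧ tgt α = l) i j}
  refine Set.eq_univ_iff_forall.1 (h component ⟨i, .refl i⟩ fun α => ?_)
  have harrow : Relation.EqvGen (fun k l => ∃ α, src α = k ∧ tgt α = l) (src α) (tgt α) :=
    .rel _ _ ⟨α, rfl, rfl⟩
  exact ⟨fun hsrc => hsrc.trans _ _ _ harrow, fun htgt => htgt.trans _ _ _ harrow.symm⟩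

variable [DecidableEq Q₀] [Fintype Q₀]

theorem indVec_add_indVec_compl (A : Finset Q₀) : indVec A + indVec Aᶜ = fun _ => 1 := by
  funext i
  by_cases hi : i ∈ A <;> simp [indVec, hi]

variable {θ : (Q₀ → ℤ) →ₗ[ℤ] ℤ} {K : Finset Q₁}

theorem StableArrowSet.eq_univ_of_src_mem_iff_tgt_mem (hK : StableArrowSet src tgt θ K)
    (hθ : θ (fun _ => 1) = 0) {A : Finset Q₀} (hA : A.Nonempty)
    (hAK : ∀ α ∈ K, src α ∈ A ↔ tgt α ∈ A) : A = Finset.univ := by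
  by_contra hA_ne
  have hpos : 0 < θ (indVec A) := hK A (fun α hα => (hAK α hα).1) hA hA_ne
  have hpos_compl : 0 < θ (indVec Aᶜ) := by
    refine hK Aᶜ (fun α hα => ?_) ?_ ?_
    · simpa only [Finset.mem_compl] using mt (hAK α hα).2
    · rwa [Finset.nonempty_iff_ne_empty, Ne, Finset.compl_eq_empty_iff]
    · rwa [Ne, Finset.compl_eq_univ_iff, ← Ne, ← Finset.nonempty_iff_ne_empty]
  have hsum : θ (indVec A) + θ (indVec Aᶜ) = 0 := by
    rw [← map_add, indVec_add_indVec_compl, hθ]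
  linarith

theorem StableArrowSet.quiverConnected_domRestrict (hK : StableArrowSet src tgt θ K)
    (hθ : θ (fun _ => 1) = 0) :
    QuiverConnected ((K : Set Q₁).domRestrict src) ((K : Set Q₁).domRestrict tgt) := by
  refine quiverConnected_of_forall_eq_univ fun A hA hAK => ?_
  lift A to Finset Q₀ using A.toFinite
  exact Finset.coe_eq_univ.2 <|
    hK.eq_univ_of_src_mem_iff_tgt_mem hθ hA fun α hα => hAK ⟨α, hα⟩

end Connectivity

section LinearIndependence

variable {Q₀ Q₁ : Type} {src tgt : Q₁ → Q₀}

theorem ker_sMap : LinearMap.ker (sMap src tgt) = LinearMap.range (rMap src tgt) :=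
  Submodule.ker_mkQ _

theorem rMap_eq_zero_of_quiverConnected_domRestrict {K : Set Q₁}
    (hK : QuiverConnected (K.domRestrict src) (K.domRestrict tgt)) {lam : Q₀ → ℝ}
    (hlam : ∀ α ∈ K, rMap src tgt lam α = 0) : rMap src tgt lam = 0 := by
  have hconst : ∀ i j, lam i = lam j :=
    hK.apply_eq_apply fun α => (sub_eq_zero.1 (hlam α α.2)).symm
  funext α
  exact sub_eq_zero.2 (hconst (tgt α) (src α))

variable [DecidableEq Q₁] {J K : Set Q₁}

theorem apply_eq_zero_of_mem_span_lamb {x : Q₁ → ℝ} (hx : x ∈ Submodule.span ℝ (lamb '' J))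
    {β : Q₁} (hβ : β ∉ J) : x β = 0 := by
  suffices Submodule.span ℝ (lamb '' J) ≤ LinearMap.ker (LinearMap.proj β) from this hx
  rw [Submodule.span_le]
  rintro _ ⟨α, hα, rfl⟩
  exact Pi.single_eq_of_ne (ne_of_mem_of_not_mem hα hβ).symm 1

theorem disjoint_span_lamb_ker_sMap (hJK : Disjoint J K)
    (hK : QuiverConnected (K.domRestrict src) (K.domRestrict tgt)) :
    Disjoint (Submodule.span ℝ (lamb '' J)) (LinearMap.ker (sMap src tgt)) := by
  rw [ker_sMap, Submodule.disjoint_def]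
  rintro _ hspan ⟨lam, rfl⟩
  exact rMap_eq_zero_of_quiverConnected_domRestrict hK fun _ hα =>
    apply_eq_zero_of_mem_span_lamb hspan (hJK.notMem_of_mem_right hα)

theorem linearIndepOn_sMap_lamb (hJK : Disjoint J K)
    (hK : QuiverConnected (K.domRestrict src) (K.domRestrict tgt)) :
    LinearIndepOn ℝ (fun α => sMap src tgt (lamb α)) J := by
  have hlamb : LinearIndepOn ℝ (lamb : Q₁ → Q₁ → ℝ) J :=
    (Pi.linearIndependent_single_one Q₁ ℝ).linearIndepOn J
  refine LinearIndependent.map hlamb ?_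
  rw [← Set.image_eq_range]
  exact disjoint_span_lamb_ker_sMap hJK hK

end LinearIndependence

/-- For `J ∈ Φ_θ` the vectors `s_*λ_α`, `α ∈ J`, are linearly
independent in `V⁻`; in particular the cone `σ⁻_J` is simplicial of dimension `#J`. -/
theorem stmt1 {Q₀ Q₁ : Type} [Fintype Q₀] [DecidableEq Q₀] [Fintype Q₁] [DecidableEq Q₁]
    (src tgt : Q₁ → Q₀) (hconn : QuiverConnected src tgt)
    (θ : (Q₀ → ℤ) →ₗ[ℤ] ℤ) (hθ : θ (fun _ => 1) = 0)
    (J : Finset Q₁) (hJ : J ∈ PhiTheta src tgt θ) :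
    LinearIndependent ℝ (fun α : {α // α ∈ J} => sMap src tgt (lamb (α : Q₁))) ∧
    Module.finrank ℝ (Submodule.span ℝ
      (Set.range fun α : {α // α ∈ J} => sMap src tgt (lamb (α : Q₁)))) = J.card := by
  have hK : QuiverConnected (((Jᶜ : Finset Q₁) : Set Q₁).domRestrict src)
      (((Jᶜ : Finset Q₁) : Set Q₁).domRestrict tgt) :=
    StableArrowSet.quiverConnected_domRestrict hJ hθ
  have hJK : Disjoint (J : Set Q₁) (Jᶜ : Finset Q₁) := Finset.disjoint_coe.2 disjoint_compl_right
  have hindep : LinearIndependent ℝ (fun α : {α // α ∈ J} => sMap src tgt (lamb (α : Q₁))) :=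
    linearIndepOn_sMap_lamb hJK hK
  exact ⟨hindep, (finrank_span_eq_card hindep).trans (Fintype.card_coe J)⟩
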